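/- Fix integers M ≥ 1, t_k ≥ 1, a prime power q, and ε_k ∈ [0,1]. Let H be a random M×s matrix over F_q, Φ a totally random s×t_k matrix over F_q, and D a t_k×t_k random diagonal matrix with i.i.d. diagonal entries equal to 1 with probability 1-ε_k and 0 otherwise, with H, Φ, D mutually independent. Then for 0 ≤ r ≤ M, Pr{rank(HΦD) = r} = Σ_{m=r}^{M} Σ_{n=r}^{t_k} Pr{rank(H)=m} · C(t_k,n)(1-ε_k)^n ε_k^{t_k-n} · ζ_r^{n,m}, where ζ_r^{n,m} is the probability that a totally random n×m matrix over F_q has rank r. -/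

import Mathlib

open scoped Classical

/-- `ζ_r^n = ∏_{i=0}^{r-1} (1 - q^{-n+i})`, `ζ_0^n = 1`. -/
noncomputable def zeta (q : ℝ) (r n : ℕ) : ℝ :=
  ∏ i ∈ Finset.range r, (1 - q ^ ((i : ℤ) - (n : ℤ)))

/-- `ζ_r^{n,m} = ζ_r^n ζ_r^m / (ζ_r^r q^{(n-r)(m-r)})`, the probability that a
totally random `n × m` matrix over `F_q` has rank `r`. -/
noncomputable def zeta2 (q : ℝ) (r n m : ℕ) : ℝ :=
  zeta q r n * zeta q r m / (zeta q r r * q ^ (((n : ℤ) - r) * ((m : ℤ) - r)))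
theorem zeta2_zero_left (q : ℝ) (r m : ℕ) : zeta2 q r 0 m = if r = 0 then 1 else 0 := by
  rcases r with _ | r
  · simp [zeta2, zeta]
  · have h : zeta q (r + 1) 0 = 0 := Finset.prod_eq_zero (i := 0) (by simp) (by simp)
    simp [zeta2, h]

theorem zeta2_zero_succ {q : ℝ} (hq : 1 < q) (n m : ℕ) :
    zeta2 q 0 (n + 1) m = zeta2 q 0 n m * q ^ (-(m : ℤ)) := by
  have hq0 : q ≠ 0 := by positivity
  simp only [zeta2, zeta, Finset.range_zero, Finset.prod_empty, one_mul, mul_one, one_div,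
    Nat.cast_zero, sub_zero, Nat.cast_add, Nat.cast_one, ← zpow_neg, ← zpow_add₀ hq0]
  congr 1
  ring

theorem zeta_succ_right (q : ℝ) (r n : ℕ) :
    zeta q (r + 1) (n + 1) = zeta q r n * (1 - q ^ (-(n : ℤ) - 1)) := by
  rw [zeta, zeta, Finset.prod_range_succ']
  congr 1
  · refine Finset.prod_congr rfl fun i _ => ?_
    push_cast
    ring_nf
  · push_cast
    ring_nf

theorem zeta_self_ne_zero {q : ℝ} (hq : 1 < q) (r : ℕ) : zeta q r r ≠ 0 := by
  refine Finset.prod_ne_zero_iff.2 fun i hi => ?_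
  have hir : (i : ℤ) - r < 0 := by simpa using Finset.mem_range.1 hi
  exact (sub_pos.2 (zpow_lt_one_of_neg₀ hq hir)).ne'

theorem zeta2_succ_succ {q : ℝ} (hq : 1 < q) (r n m : ℕ) :
    zeta2 q (r + 1) (n + 1) m =
      zeta2 q (r + 1) n m * q ^ ((r : ℤ) + 1 - m) + zeta2 q r n m * (1 - q ^ ((r : ℤ) - m)) := by
  have hq0 : q ≠ 0 := by positivity
  have hr := zeta_self_ne_zero hq r
  have hr1 : 1 - q ^ (-(r : ℤ) - 1) ≠ 0 := by
    have := zeta_self_ne_zero hq (r + 1)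
    rw [zeta_succ_right] at this
    exact right_ne_zero_of_mul this
  have hsucc (k : ℕ) : zeta q (r + 1) k = zeta q r k * (1 - q ^ ((r : ℤ) - k)) :=
    Finset.prod_range_succ _ _
  simp only [zeta2, zeta_succ_right, hsucc n, hsucc m]
  push_cast
  obtain ⟨E, hE⟩ : ∃ E : ℤ, E = ((n : ℤ) - r) * ((m : ℤ) - r) := ⟨_, rfl⟩
  have hexp_left : ((n : ℤ) + 1 - (r + 1)) * ((m : ℤ) - (r + 1)) = E - (n - r) := by rw [hE]; ring
  have hexp_right : ((n : ℤ) - (r + 1)) * ((m : ℤ) - (r + 1)) = E - n - m + 2 * r + 1 := by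
    rw [hE]; ring
  rw [hexp_left, hexp_right, ← hE]
  have hE0 : q ^ E ≠ 0 := zpow_ne_zero _ hq0
  have hn0 : q ^ (n : ℤ) ≠ 0 := zpow_ne_zero _ hq0
  have hm0 : q ^ (m : ℤ) ≠ 0 := zpow_ne_zero _ hq0
  have hR0 : q ^ (r : ℤ) ≠ 0 := zpow_ne_zero _ hq0
  simp only [two_mul, zpow_sub₀ hq0, zpow_add₀ hq0, zpow_neg, zpow_one] at hr1 ⊢
  generalize q ^ E = e at *
  generalize q ^ (n : ℤ) = a at *
  generalize q ^ (m : ℤ) = b at *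
  generalize q ^ (r : ℤ) = c at *
  have hcq : c * q - 1 ≠ 0 := by
    intro h
    apply hr1
    field_simp
    linear_combination h
  have hc : 1 - c⁻¹ / q = (c * q - 1) / (c * q) := by field_simp
  obtain ⟨w, hw⟩ : ∃ w, w = c * q - 1 := ⟨_, rfl⟩
  rw [← hw] at hc hcq
  rw [hc]
  field_simp
  rw [hw]
  ring

section Counting

open Module Submodule

variable {F V W : Type*} [Field F] [AddCommGroup V] [Module F V] [AddCommGroup W] [Module F W]

theorem finrank_span_singleton_sup [FiniteDimensional F W] (U : Submodule F W) (w : W) :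
    finrank F ↥(span F {w} ⊔ U) = if w ∈ U then finrank F U else finrank F U + 1 := by
  split_ifs with h
  · rw [sup_eq_right.2 ((span_singleton_le_iff_mem _ _).2 h)]
  · have h0 : w ≠ 0 := fun h0 => h (h0 ▸ U.zero_mem)
    have hd : Disjoint (span F {w}) U := ((disjoint_span_singleton' h0).2 h).symm
    have := finrank_sup_add_finrank_inf_eq (span F {w}) U
    rw [hd.eq_bot, finrank_bot, finrank_span_singleton h0] at this
    omega

theorem finrank_comap_add_finrank_range [FiniteDimensional F V] [FiniteDimensional F W]
    (L : V →ₗ[F] W) {U : Submodule F W} (hU : U ≤ LinearMap.range L) :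
    finrank F (U.comap L) + finrank F (LinearMap.range L) = finrank F V + finrank F U := by
  have h1 := (L.domRestrict (U.comap L)).finrank_range_add_finrank_ker
  have h2 := L.finrank_range_add_finrank_ker
  rw [LinearMap.range_domRestrict, map_comap_eq_of_le hU] at h1
  have h3 : finrank F (LinearMap.ker (L.domRestrict (U.comap L))) =
      finrank F (LinearMap.ker L) := by
    rw [LinearMap.ker_domRestrict]
    exact (submoduleOfEquivOfLe (LinearMap.ker_le_comap L)).finrank_eq
  omega

variable [Fintype F] [Fintype V] [FiniteDimensional F W]

theorem card_mem_comap (L : V →ₗ[F] W) {U : Submodule F W} (hU : U ≤ LinearMap.range L) :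
    ∑ x : V, (if L x ∈ U then (1 : ℝ) else 0) =
      Fintype.card V *
        (Fintype.card F : ℝ) ^ ((finrank F U : ℤ) - finrank F (LinearMap.range L)) := by
  have hq0 : (Fintype.card F : ℝ) ≠ 0 := by simp
  have h := finrank_comap_add_finrank_range L hU
  have hc : ∑ x : V, (if L x ∈ U then (1 : ℝ) else 0) = Fintype.card (U.comap L) := by
    rw [Finset.sum_boole, Fintype.card_subtype]
    rfl
  rw [hc, card_eq_pow_finrank (K := F), card_eq_pow_finrank (K := F) (V := V)]
  push_cast
  rw [← zpow_natCast, ← zpow_natCast, ← zpow_add₀ hq0]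
  congr 1
  omega

theorem sum_finrank_span_singleton_sup_eq (L : V →ₗ[F] W) {U : Submodule F W}
    (hU : U ≤ LinearMap.range L) (r : ℕ) :
    ∑ x : V, (if finrank F ↥(span F {L x} ⊔ U) = r then (1 : ℝ) else 0) =
      Fintype.card V *
        ((if finrank F U = r then 1 else 0) *
            (Fintype.card F : ℝ) ^ ((r : ℤ) - finrank F (LinearMap.range L)) +
          (if finrank F U + 1 = r then 1 else 0) *
            (1 - (Fintype.card F : ℝ) ^ ((r : ℤ) - 1 - finrank F (LinearMap.range L)))) := by
  have h (x : V) : (if finrank F ↥(span F {L x} ⊔ U) = r then (1 : ℝ) else 0) =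
      (if L x ∈ U then 1 else 0) * (if finrank F U = r then 1 else 0) +
        (1 - if L x ∈ U then 1 else 0) * (if finrank F U + 1 = r then 1 else 0) := by
    rw [finrank_span_singleton_sup]
    by_cases hx : L x ∈ U <;> simp [hx]
  simp only [h, Finset.sum_add_distrib, ← Finset.sum_mul, Finset.sum_sub_distrib,
    card_mem_comap L hU]
  simp only [Finset.sum_const, Finset.card_univ, nsmul_eq_mul, mul_one]
  by_cases h1 : finrank F U = r
  · subst h1
    simp
  · by_cases h2 : finrank F U + 1 = r
    · subst h2
      simp
      ring
    · simp [h1, h2]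

/-- The number of tuples `φ` for which the vectors `L (φ i)`, erased where `d i` is false,
span a space of dimension `r`. -/
theorem sum_finrank_span_erased_eq (L : V →ₗ[F] W) {t : ℕ} (d : Fin t → Bool) (r : ℕ) :
    ∑ φ : Fin t → V,
        (if finrank F (span F (Set.range fun i => if d i then L (φ i) else 0)) = r
          then (1 : ℝ) else 0) =
      (Fintype.card V : ℝ) ^ t *
        zeta2 (Fintype.card F) r (Finset.univ.filter fun i => d i = true).card
          (finrank F (LinearMap.range L)) := by
  have hq : (1 : ℝ) < Fintype.card F := by exact_mod_cast Fintype.one_lt_card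
  induction t generalizing r with
  | zero =>
    have hspan (φ : Fin 0 → V) :
        finrank F (span F (Set.range fun i => if d i then L (φ i) else 0)) = 0 := by
      rw [Set.range_eq_empty, span_empty, finrank_bot]
    simp only [hspan, eq_comm (a := 0)]
    simp [zeta2_zero_left]
  | succ t ih =>
    have hspan (x : V) (φ : Fin t → V) :
        finrank F (span F (Set.range fun i : Fin (t + 1) =>
          if d i then L ((Fin.cons x φ : Fin (t + 1) → V) i) else 0)) =
        finrank F ↥(span F {if d 0 then L x else 0} ⊔
          span F (Set.range fun i : Fin t => if d i.succ then L (φ i) else 0)) := by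
      rw [← span_insert, Fin.range_fin_succ]
      rfl
    have hsum (f : (Fin (t + 1) → V) → ℝ) :
        ∑ φ, f φ = ∑ φ : Fin t → V, ∑ x : V, f (Fin.cons x φ) := by
      rw [← (Fin.consEquiv fun _ => V).sum_comp, Fintype.sum_prod_type_right]
      rfl
    rw [hsum, Fin.card_filter_univ_succ]
    by_cases h0 : d 0
    case neg =>
      have herase (x : V) (φ : Fin t → V) :
          finrank F (span F (Set.range fun i : Fin (t + 1) =>
            if d i then L ((Fin.cons x φ : Fin (t + 1) → V) i) else 0)) =
          finrank F (span F (Set.range fun i : Fin t => if d i.succ then L (φ i) else 0)) := by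
        rw [hspan, if_neg h0, span_zero_singleton, bot_sup_eq]
      simp only [herase, if_neg h0, Finset.sum_const, Finset.card_univ, nsmul_eq_mul,
        ← Finset.mul_sum]
      rw [ih (fun i => d i.succ) r, pow_succ']
      ring_nf
    case pos =>
      have hle (φ : Fin t → V) :
          span F (Set.range fun i : Fin t => if d i.succ then L (φ i) else 0) ≤
            LinearMap.range L := by
        rw [span_le]
        rintro _ ⟨i, rfl⟩
        dsimp only
        split_ifs
        · exact LinearMap.mem_range_self _ _
        · exact zero_mem _
      have hcons (x : V) (φ : Fin t → V) :
          finrank F (span F (Set.range fun i : Fin (t + 1) =>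
            if d i then L ((Fin.cons x φ : Fin (t + 1) → V) i) else 0)) =
          finrank F ↥(span F {L x} ⊔
            span F (Set.range fun i : Fin t => if d i.succ then L (φ i) else 0)) := by
        rw [hspan, if_pos h0]
      simp only [hcons, if_pos h0, sum_finrank_span_singleton_sup_eq L (hle _), ← Finset.mul_sum,
        Finset.sum_add_distrib, ← Finset.sum_mul]
      rw [ih (fun i => d i.succ) r]
      rcases r with _ | r
      · simp [zeta2_zero_succ hq, pow_succ']
        ring
      · simp only [add_left_inj]
        rw [ih (fun i => d i.succ) r, zeta2_succ_succ hq]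
        push_cast
        rw [add_sub_cancel_right, pow_succ']
        ring

end Counting

theorem sum_rank_mul_mul_diagonal_eq {F : Type*} [Field F] [Fintype F] {M s t : ℕ}
    (h : Matrix (Fin M) (Fin s) F) (d : Fin t → Bool) (r : ℕ) :
    ∑ φ : Matrix (Fin s) (Fin t) F,
        (if (h * φ * Matrix.diagonal fun i => if d i then (1 : F) else 0).rank = r
          then (1 : ℝ) else 0) =
      Fintype.card (Matrix (Fin s) (Fin t) F) *
        zeta2 (Fintype.card F) r (Finset.univ.filter fun i => d i = true).card h.rank := by
  have hrank (ψ : Matrix (Fin t) (Fin s) F) :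
      (h * ψ.transpose * Matrix.diagonal fun i => if d i then (1 : F) else 0).rank =
        Module.finrank F (Submodule.span F
          (Set.range fun i => if d i then h.mulVecLin (ψ i) else 0)) := by
    have hcol : (h * ψ.transpose * Matrix.diagonal fun i => if d i then (1 : F) else 0).col =
        fun i => if d i then h.mulVecLin (ψ i) else 0 := by
      ext j i
      rw [Matrix.col_apply, Matrix.mul_diagonal]
      split_ifs
      · rw [mul_one]; rfl
      · simp
    rw [Matrix.rank_eq_finrank_span_cols, hcol]
  have hcard : (Fintype.card (Matrix (Fin s) (Fin t) F) : ℝ) =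
      (Fintype.card (Fin s → F) : ℝ) ^ t := by
    rw [← Nat.cast_pow, Fintype.card_congr (Matrix.transposeAddEquiv (Fin s) (Fin t) F).toEquiv]
    congr 1
    exact (Fintype.card_fun (α := Fin t) (β := Fin s → F)).trans (by rw [Fintype.card_fin])
  rw [hcard, Matrix.rank, ← sum_finrank_span_erased_eq,
    ← (Matrix.transposeAddEquiv (Fin t) (Fin s) F).toEquiv.sum_comp]
  exact Finset.sum_congr rfl fun ψ _ => by rw [← hrank]; rfl

theorem zeta2_eq_zero_of_lt_left {q : ℝ} {r n : ℕ} (m : ℕ) (h : n < r) : zeta2 q r n m = 0 := by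
  have h0 : zeta q r n = 0 := Finset.prod_eq_zero (Finset.mem_range.2 h) (by simp)
  simp [zeta2, h0]

theorem zeta2_eq_zero_of_lt_right {q : ℝ} {r m : ℕ} (n : ℕ) (h : m < r) : zeta2 q r n m = 0 := by
  have h0 : zeta q r m = 0 := Finset.prod_eq_zero (Finset.mem_range.2 h) (by simp)
  simp [zeta2, h0]

theorem PMF.toOuterMeasure_uniformOfFintype_ofPred {α : Type*} [Fintype α] [Nonempty α]
    (p : α → Prop) [DecidablePred p] :
    (PMF.uniformOfFintype α).toOuterMeasure {a | p a} =
      ENNReal.ofReal ((∑ a, if p a then (1 : ℝ) else 0) / Fintype.card α) := by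
  have hα : (0 : ℝ) < Fintype.card α := by exact_mod_cast Fintype.card_pos
  rw [PMF.toOuterMeasure_uniformOfFintype_apply, Finset.sum_boole, ENNReal.ofReal_div_of_pos hα,
    ENNReal.ofReal_natCast, ENNReal.ofReal_natCast, Fintype.card_subtype]
  rfl

theorem toOuterMeasure_rank_erasure {F : Type*} [Field F] [Fintype F] {M s t : ℕ} {ε : ℝ}
    (hε : ε ∈ Set.Icc (0 : ℝ) 1) (dp : PMF (Fin t → Bool))
    (hdp : ∀ f : Fin t → Bool,
      dp f = ∏ i : Fin t, (if f i then ENNReal.ofReal (1 - ε) else ENNReal.ofReal ε))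
    (h : Matrix (Fin M) (Fin s) F) (r : ℕ) :
    ((PMF.uniformOfFintype (Matrix (Fin s) (Fin t) F)).bind fun φ => dp.map fun d =>
        h * φ * Matrix.diagonal (fun i => if d i then (1 : F) else 0)).toOuterMeasure
          {X | X.rank = r} =
      ∑ n ∈ Finset.Icc r t, ENNReal.ofReal
        ((t.choose n : ℝ) * (1 - ε) ^ n * ε ^ (t - n) * zeta2 (Fintype.card F) r n h.rank) := by
  have hε0 : 0 ≤ ε := hε.1
  have hε1 : 0 ≤ 1 - ε := sub_nonneg.2 hε.2
  have hweight (f : Fin t → Bool) : dp f = ENNReal.ofReal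
      ((1 - ε) ^ (Finset.univ.filter fun i => f i = true).card *
        ε ^ (t - (Finset.univ.filter fun i => f i = true).card)) := by
    rw [hdp, Finset.prod_ite, Finset.prod_const, Finset.prod_const, Finset.filter_not,
      Finset.card_sdiff_of_subset (Finset.subset_univ _), Finset.card_univ, Fintype.card_fin,
      ENNReal.ofReal_mul (by positivity), ENNReal.ofReal_pow hε1, ENNReal.ofReal_pow hε0]
  have hfixed (d : Fin t → Bool) :
      ((PMF.uniformOfFintype (Matrix (Fin s) (Fin t) F)).map fun φ =>
        h * φ * Matrix.diagonal (fun i => if d i then (1 : F) else 0)).toOuterMeasure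
          {X | X.rank = r} =
      ENNReal.ofReal (zeta2 (Fintype.card F) r
        (Finset.univ.filter fun i => d i = true).card h.rank) := by
    have hcard : (Fintype.card (Matrix (Fin s) (Fin t) F) : ℝ) ≠ 0 := by
      exact_mod_cast Fintype.card_ne_zero
    rw [PMF.toOuterMeasure_map_apply, Set.preimage_ofPred_eq,
      PMF.toOuterMeasure_uniformOfFintype_ofPred, sum_rank_mul_mul_diagonal_eq,
      mul_div_cancel_left₀ _ hcard]
  simp_rw [← PMF.bind_pure_comp, Function.comp_def] at hfixed ⊢
  rw [PMF.bind_comm, PMF.toOuterMeasure_bind_apply, tsum_fintype]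
  simp_rw [hfixed, hweight]
  have hpow (c : ℕ → ENNReal) :
      ∑ d : Fin t → Bool, c (Finset.univ.filter fun i => d i = true).card =
        ∑ n ∈ Finset.range (t + 1), t.choose n • c n := by
    have := Finset.sum_powerset_apply_card c (x := (Finset.univ : Finset (Fin t)))
    rw [Finset.card_univ, Fintype.card_fin, Finset.powerset_univ] at this
    rw [← this]
    refine Finset.sum_bij' (fun d _ => Finset.univ.filter fun i => d i = true)
      (fun S _ i => decide (i ∈ S)) ?_ ?_ ?_ ?_ ?_ <;> simp
  rw [hpow fun n => ENNReal.ofReal ((1 - ε) ^ n * ε ^ (t - n)) *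
    ENNReal.ofReal (zeta2 (Fintype.card F) r n h.rank)]
  have hsub : Finset.Icc r t ⊆ Finset.range (t + 1) := fun n hn =>
    Finset.mem_range_succ_iff.2 (Finset.mem_Icc.1 hn).2
  rw [← Finset.sum_subset hsub]
  · refine Finset.sum_congr rfl fun n _ => ?_
    rw [nsmul_eq_mul, ← ENNReal.ofReal_mul (by positivity), ← ENNReal.ofReal_natCast,
      ← ENNReal.ofReal_mul (by positivity)]
    ring_nf
  · intro n hn hn'
    have hlt : n < r := by
      simp only [Finset.mem_range, Finset.mem_Icc] at hn hn'
      omega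
    simp [zeta2_eq_zero_of_lt_left _ hlt]

/-- One-hop rank evolution of BATS codes (Theorem 1): if `H` is a random
`M × s` matrix, `Φ` a totally random `s × t` matrix and `D` a random `{0,1}`
diagonal matrix with i.i.d. Bernoulli(1-ε) diagonal entries, all independent,
then `Pr{rank (H Φ D) = r} = Σ_{m=r}^{M} Σ_{n=r}^{t}
Pr{rank H = m} C(t,n)(1-ε)^n ε^{t-n} ζ_r^{n,m}`. -/
theorem rank_evolution_one_hop
    {F : Type*} [Field F] [Fintype F] [DecidableEq F]
    (M s t : ℕ) (hM : 1 ≤ M) (ht : 1 ≤ t) (ε : ℝ) (hε : ε ∈ Set.Icc (0 : ℝ) 1)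
    (H : PMF (Matrix (Fin M) (Fin s) F))
    (dp : PMF (Fin t → Bool))
    (hdp : ∀ f : Fin t → Bool,
      dp f = ∏ i : Fin t,
        (if f i then ENNReal.ofReal (1 - ε) else ENNReal.ofReal ε))
    (out : PMF (Matrix (Fin M) (Fin t) F))
    (hout : out =
      H.bind fun h =>
        (PMF.uniformOfFintype (Matrix (Fin s) (Fin t) F)).bind fun φ =>
          dp.map fun d =>
            h * φ * Matrix.diagonal (fun i => if d i then (1 : F) else 0))
    (r : ℕ) (hr : r ≤ M) :
    out.toOuterMeasure {X | X.rank = r} =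
      ∑ m ∈ Finset.Icc r M, ∑ n ∈ Finset.Icc r t,
        H.toOuterMeasure {h | h.rank = m} *
          ENNReal.ofReal
            ((t.choose n : ℝ) * (1 - ε) ^ n * ε ^ (t - n) *
              zeta2 (Fintype.card F) r n m) := by
  subst hout
  rw [PMF.toOuterMeasure_bind_apply, tsum_fintype]
  simp_rw [toOuterMeasure_rank_erasure hε dp hdp, PMF.toOuterMeasure_apply_fintype,
    ← Finset.mul_sum, Finset.sum_mul]
  rw [Finset.sum_comm]
  refine Finset.sum_congr rfl fun h _ => ?_
  simp only [Set.indicator_apply, Set.mem_ofPred_eq, ite_mul, zero_mul]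
  rw [Finset.sum_ite_eq]
  split_ifs with hmem
  · rfl
  · have hlt : h.rank < r := by
      have := h.rank_le_height
      simp only [Finset.mem_Icc] at hmem
      omega
    simp [zeta2_eq_zero_of_lt_right _ hlt]
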